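/- Let A', A, B', B be finite nonempty types, ρ : Matrix (A' × A × B') (A' × A × B') ℂ positive semidefinite, and J : Matrix (A × B) (A × B) ℂ positive semidefinite. Define ω : Matrix (A' × B × B') (A' × B × B') ℂ by ω (a',b,b') (â',b̂,b̂') = ∑_{a,â} ρ (a',a,b') (â',â,b̂') * J (a,b) (â,b̂). Define Wρ := sInf {t : ℝ | ∃ C, C admits a separable decomposition across (A'×A):B' ∧ ρ ≤ C ∧ t = Re(trace C)}, Σ := sInf {μ : ℝ | ∃ Y ∈ SEP(A:B), J ≤ Y ∧ Tr_B Y ≤ μ • (1 : Matrix A A ℂ)}, and Wω := sInf {t : ℝ | ∃ E, E admits a separable decomposition across A':(B×B') ∧ ω ≤ E ∧ t = Re(trace E)}. Then Wω ≤ Σ * Wρ. (This is the inequality W_sep(A';BB')_ω ≤ Σ(N) · W_sep(A'A;B')_ρ, equivalent to Proposition 3 after taking logarithms.) -/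

import Mathlib

open Matrix ComplexOrder Kronecker

noncomputable section

/-- Partial transpose over the last (`γ`) factor of a matrix on `α × β × γ`:
`T_γ(X) (a,b,c) (a',b',c') = X (a,b,c') (a',b',c)`. -/
def ptLast {α β γ : Type*} (X : Matrix (α × β × γ) (α × β × γ) ℂ) :
    Matrix (α × β × γ) (α × β × γ) ℂ :=
  Matrix.of fun x y => X (x.1, x.2.1, y.2.2) (y.1, y.2.1, x.2.2)

/-- Partial transpose over `β` of a matrix on `α × β`:
`T_β(X) (a,b) (a',b') = X (a,b') (a',b)`. -/
def ptSnd {α β : Type*} (X : Matrix (α × β) (α × β) ℂ) : Matrix (α × β) (α × β) ℂ :=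
  Matrix.of fun x y => X (x.1, y.2) (y.1, x.2)

/-- Joint partial transpose over `β` and `γ` of a matrix on `α × β × γ`:
`T_{βγ}(X) (a,b,c) (a',b',c') = X (a,b',c') (a',b,c)`. -/
def ptBoth {α β γ : Type*} (X : Matrix (α × β × γ) (α × β × γ) ℂ) :
    Matrix (α × β × γ) (α × β × γ) ℂ :=
  Matrix.of fun x y => X (x.1, y.2.1, y.2.2) (y.1, x.2.1, x.2.2)

/-- Partial trace over the second factor: `(Tr_β X) a a' = ∑ b, X (a,b) (a',b)`. -/
def ptrSnd {α β : Type*} [Fintype β] (X : Matrix (α × β) (α × β) ℂ) : Matrix α α ℂ :=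
  Matrix.of fun a a' => ∑ b, X (a, b) (a', b)

/-- Membership in the separable cone `SEP(α:β)`. -/
def InSepCone {α β : Type*} [Fintype α] [Fintype β] (X : Matrix (α × β) (α × β) ℂ) : Prop :=
  ∃ (n : ℕ) (P : Fin n → Matrix α α ℂ) (Q : Fin n → Matrix β β ℂ),
    (∀ i, (P i).PosSemidef) ∧ (∀ i, (Q i).PosSemidef) ∧
    ∀ x y : α × β, X x y = ∑ i, P i x.1 y.1 * Q i x.2 y.2

/-!
Let `C ≥ ρ` be separable across `(A'A) : B'` and `Y ≥ J` separable across `A : B`, and write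
`X ⋆ K` for the map with Choi matrix `K` applied to the system `A` of `X`. Then `C ⋆ Y` is separable
across `A' : (BB')`, it dominates `ω = ρ ⋆ J` because `C ⋆ Y - ρ ⋆ J = (C - ρ) ⋆ Y + ρ ⋆ (Y - J)`,
and `Tr_B Y ≤ μ 1` gives `tr (C ⋆ Y) ≤ μ tr C`. It remains to take infima over `C` and `Y`.
-/

section PosSemidef

variable {𝕜 ι κ m n : Type*} [RCLike 𝕜]

theorem posSemidef_sum_blocks [Finite ι] [Fintype κ] {H : Matrix (ι × κ) (ι × κ) 𝕜}
    (hH : H.PosSemidef) :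
    (Matrix.of fun i j => ∑ k, ∑ l, H (i, k) (j, l)).PosSemidef := by
  classical
  have := Fintype.ofFinite ι
  let V : Matrix (ι × κ) ι 𝕜 := (1 : Matrix ι ι 𝕜).submatrix Prod.fst id
  convert hH.conjTranspose_mul_mul_same V using 1
  ext i j
  rw [Matrix.of_apply, Finset.sum_comm]
  simp [V, Matrix.mul_apply, Matrix.one_apply, Fintype.sum_prod_type_right]

theorem posSemidef_contraction [Finite ι] [Fintype κ] {M : Matrix m m 𝕜} {N : Matrix n n 𝕜}
    (hM : M.PosSemidef) (hN : N.PosSemidef) (f : ι → κ → m) (g : ι → κ → n) :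
    (Matrix.of fun i j => ∑ k, ∑ l, M (f i k) (f j l) * N (g i k) (g j l)).PosSemidef := by
  have hH := (hM.submatrix fun p : ι × κ => f p.1 p.2).hadamard (hN.submatrix fun p => g p.1 p.2)
  simpa only [Matrix.hadamard_apply, Matrix.submatrix_apply] using posSemidef_sum_blocks hH

theorem posSemidef_ptrSnd [Fintype κ] {Y : Matrix (ι × κ) (ι × κ) ℂ} (hY : Y.PosSemidef) :
    (ptrSnd Y).PosSemidef := by
  have hsum : ptrSnd Y = ∑ b, Y.submatrix (·, b) (·, b) := by
    ext a a'
    simp [ptrSnd, Matrix.sum_apply]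
  rw [hsum]
  exact Matrix.posSemidef_sum _ fun b _ => hY.submatrix _

open scoped MatrixOrder Matrix.Norms.L2Operator in
theorem exists_posSemidef_smul_one_sub [Finite m] [DecidableEq m] {M : Matrix m m ℂ}
    (hM : M.IsHermitian) : ∃ c : ℝ, 0 ≤ c ∧ (c • (1 : Matrix m m ℂ) - M).PosSemidef := by
  have := Fintype.ofFinite m
  refine ⟨‖M‖, norm_nonneg M, ?_⟩
  rw [← Matrix.le_iff, ← Algebra.algebraMap_eq_smul_one]
  exact IsSelfAdjoint.le_algebraMap_norm_self hM

end PosSemidef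

section ChoiApply

variable {α κ β γ : Type*} [Fintype κ]

/-- The matrix `(id ⊗ N ⊗ id)(X)`, where `N` is the linear map from `κ`- to `β`-indexed matrices
with Choi matrix `J`, that is, `J (k, b) (l, b') = N(|k⟩⟨l|) b b'`. -/
def choiApply (X : Matrix (α × κ × γ) (α × κ × γ) ℂ) (J : Matrix (κ × β) (κ × β) ℂ) :
    Matrix (α × β × γ) (α × β × γ) ℂ :=
  Matrix.of fun x y => ∑ k, ∑ l,
    X (x.1, k, x.2.2) (y.1, l, y.2.2) * J (k, x.2.1) (l, y.2.1)

theorem posSemidef_choiApply [Finite α] [Finite β] [Finite γ]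
    {X : Matrix (α × κ × γ) (α × κ × γ) ℂ} {J : Matrix (κ × β) (κ × β) ℂ}
    (hX : X.PosSemidef) (hJ : J.PosSemidef) : (choiApply X J).PosSemidef :=
  posSemidef_contraction hX hJ (fun (x : α × β × γ) k => (x.1, k, x.2.2))
    (fun (x : α × β × γ) k => (k, x.2.1))

theorem choiApply_sub_choiApply (C X : Matrix (α × κ × γ) (α × κ × γ) ℂ)
    (Y J : Matrix (κ × β) (κ × β) ℂ) :
    choiApply C Y - choiApply X J = choiApply (C - X) Y + choiApply X (Y - J) := by
  ext x y
  simp only [choiApply, Matrix.sub_apply, Matrix.add_apply, Matrix.of_apply, sub_mul, mul_sub,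
    Finset.sum_sub_distrib, sub_add_sub_cancel]

theorem posSemidef_choiApply_sub_choiApply [Finite α] [Finite β] [Finite γ]
    {C X : Matrix (α × κ × γ) (α × κ × γ) ℂ} {Y J : Matrix (κ × β) (κ × β) ℂ}
    (hX : X.PosSemidef) (hXC : (C - X).PosSemidef)
    (hY : Y.PosSemidef) (hJY : (Y - J).PosSemidef) :
    (choiApply C Y - choiApply X J).PosSemidef := by
  rw [choiApply_sub_choiApply]
  exact (posSemidef_choiApply hXC hY).add (posSemidef_choiApply hX hJY)

variable [Fintype α] [Fintype β] [Fintype γ]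

theorem trace_choiApply (X : Matrix (α × κ × γ) (α × κ × γ) ℂ) (Y : Matrix (κ × β) (κ × β) ℂ) :
    (choiApply X Y).trace =
      ∑ a, ∑ c, ∑ k, ∑ l, X (a, k, c) (a, l, c) * ptrSnd Y k l := by
  simp only [Matrix.trace, Matrix.diag, choiApply, ptrSnd, Matrix.of_apply,
    Fintype.sum_prod_type, Finset.mul_sum]
  refine Finset.sum_congr rfl fun a _ => ?_
  rw [Finset.sum_comm]
  refine Finset.sum_congr rfl fun c _ => ?_
  rw [Finset.sum_comm]
  exact Finset.sum_congr rfl fun k _ => Finset.sum_comm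

theorem trace_choiApply_le [DecidableEq κ] {X : Matrix (α × κ × γ) (α × κ × γ) ℂ}
    {Y : Matrix (κ × β) (κ × β) ℂ} {μ : ℝ} (hX : X.PosSemidef)
    (hμ : (μ • (1 : Matrix κ κ ℂ) - ptrSnd Y).PosSemidef) :
    (choiApply X Y).trace ≤ μ * X.trace := by
  have hgap := (posSemidef_contraction hX hμ
    (fun (x : α × γ) k => (x.1, k, x.2)) (fun _ k => k)).trace_nonneg
  have htrace : ∑ a, ∑ c, ∑ k, ∑ l, X (a, k, c) (a, l, c) * (μ • (1 : Matrix κ κ ℂ)) k l =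
      μ * X.trace := by
    simp only [Matrix.smul_apply, Matrix.one_apply, smul_ite, smul_zero, mul_ite, mul_zero,
      Finset.sum_ite_eq, Finset.mem_univ, if_true, Complex.real_smul, mul_one, mul_comm _ (μ : ℂ),
      ← Finset.mul_sum, Matrix.trace, Matrix.diag, Fintype.sum_prod_type]
    exact congrArg _ (Finset.sum_congr rfl fun a _ => Finset.sum_comm)
  rw [← sub_nonneg, ← htrace, trace_choiApply]
  simpa only [Matrix.trace, Matrix.diag, Matrix.of_apply, Matrix.sub_apply, mul_sub,
    Finset.sum_sub_distrib, Fintype.sum_prod_type] using hgap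

end ChoiApply

/-- Membership in the separable cone of the bipartition `e` of the index type `ι`. The cone
`InSepCone` is the case `e = Equiv.refl _`; the cut `(A' × A) : B'` of `A' × A × B'` is
`e = (Equiv.prodAssoc A' A B').symm`. -/
def SeparableAcross {ι α β : Type*} (e : ι ≃ α × β) (X : Matrix ι ι ℂ) : Prop :=
  ∃ (n : ℕ) (P : Fin n → Matrix α α ℂ) (Q : Fin n → Matrix β β ℂ),
    (∀ i, (P i).PosSemidef) ∧ (∀ i, (Q i).PosSemidef) ∧
    ∀ x y, X x y = ∑ i, P i (e x).1 (e y).1 * Q i (e x).2 (e y).2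

namespace SeparableAcross

variable {ι α β : Type*} {e : ι ≃ α × β} {X : Matrix ι ι ℂ}

theorem of_fintype {s : Type*} [Fintype s] {P : s → Matrix α α ℂ} {Q : s → Matrix β β ℂ}
    (hP : ∀ i, (P i).PosSemidef) (hQ : ∀ i, (Q i).PosSemidef)
    (hX : ∀ x y, X x y = ∑ i, P i (e x).1 (e y).1 * Q i (e x).2 (e y).2) :
    SeparableAcross e X := by
  let σ := (Fintype.equivFin s).symm
  refine ⟨Fintype.card s, P ∘ σ, Q ∘ σ, fun i => hP (σ i), fun i => hQ (σ i), fun x y => ?_⟩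
  rw [hX, ← Equiv.sum_comp σ]
  rfl

theorem posSemidef [Finite α] [Finite β] (hX : SeparableAcross e X) : X.PosSemidef := by
  obtain ⟨n, P, Q, hP, hQ, hX⟩ := hX
  have hsum : X = ∑ i, (P i ⊗ₖ Q i).submatrix e e := by
    ext x y
    simp [hX, Matrix.sum_apply]
  rw [hsum]
  exact Matrix.posSemidef_sum _ fun i _ => ((hP i).kronecker (hQ i)).submatrix e

theorem smul_one [DecidableEq ι] (e : ι ≃ α × β) {c : ℝ} (hc : 0 ≤ c) :
    SeparableAcross e (c • (1 : Matrix ι ι ℂ)) := by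
  classical
  have hprod : (1 : Matrix ι ι ℂ) = ((1 : Matrix α α ℂ) ⊗ₖ (1 : Matrix β β ℂ)).submatrix e e := by
    rw [Matrix.one_kronecker_one, Matrix.submatrix_one_equiv]
  refine of_fintype (s := Unit) (P := fun _ => c • 1) (Q := fun _ => 1)
    (fun _ => Matrix.PosSemidef.one.smul hc) (fun _ => Matrix.PosSemidef.one) fun x y => ?_
  rw [Matrix.smul_apply, hprod, Fintype.sum_unique, Matrix.smul_apply, smul_mul_assoc]
  rfl

/-- Contracting the input of a Choi matrix `S ⊗ T` against `P ⊗ Q` gives `R ⊗ (T ⊗ Q)` with `R`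
the contraction of `P` and `S`: the output joins the other side of the cut. -/
theorem choiApply {κ γ : Type*} [Finite α] [Fintype κ] [Finite β] [Finite γ]
    {C : Matrix (α × κ × γ) (α × κ × γ) ℂ} {Y : Matrix (κ × β) (κ × β) ℂ}
    (hC : SeparableAcross (Equiv.prodAssoc α κ γ).symm C)
    (hY : SeparableAcross (Equiv.refl (κ × β)) Y) :
    SeparableAcross (Equiv.refl (α × β × γ)) (choiApply C Y) := by
  obtain ⟨n, P, Q, hP, hQ, hC⟩ := hC
  obtain ⟨m, S, T, hS, hT, hY⟩ := hY
  refine of_fintype (s := Fin n × Fin m)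
    (P := fun i => Matrix.of fun a a' => ∑ k, ∑ l, P i.1 (a, k) (a', l) * S i.2 k l)
    (Q := fun i => T i.2 ⊗ₖ Q i.1)
    (fun i => posSemidef_contraction (hP i.1) (hS i.2) Prod.mk fun _ k => k)
    (fun i => (hT i.2).kronecker (hQ i.1)) ?_
  rintro ⟨a, b, c⟩ ⟨a', b', c'⟩
  calc ∑ k, ∑ l, C (a, k, c) (a', l, c') * Y (k, b) (l, b')
      = ∑ k, ∑ l, ∑ i : Fin n × Fin m,
          P i.1 (a, k) (a', l) * S i.2 k l * (T i.2 b b' * Q i.1 c c') := by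
        refine Finset.sum_congr rfl fun k _ => Finset.sum_congr rfl fun l _ => ?_
        simp only [hC, hY, Equiv.prodAssoc_symm_apply, Equiv.refl_apply, Finset.sum_mul_sum,
          Fintype.sum_prod_type]
        exact Finset.sum_congr rfl fun i _ => Finset.sum_congr rfl fun j _ => by ring
    _ = ∑ i : Fin n × Fin m, (∑ k, ∑ l, P i.1 (a, k) (a', l) * S i.2 k l) *
          (T i.2 b b' * Q i.1 c c') := by
        simp only [Finset.sum_mul]
        exact (Finset.sum_congr rfl fun _ _ => Finset.sum_comm).trans Finset.sum_comm

end SeparableAcross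

section Values

variable {ι α β κ γ : Type*}

/-- The objective values of the program for `W_sep(α:β)_X` over the feasible separable `C ≥ X`;
their infimum is `W_sep(α:β)_X = 2 ^ E_max(α;β)_X`. -/
def sepValues [Fintype ι] (e : ι ≃ α × β) (X : Matrix ι ι ℂ) : Set ℝ :=
  {t | ∃ C, SeparableAcross e C ∧ (C - X).PosSemidef ∧ t = C.trace.re}

/-- The objective values of the program for `Σ(N)` over the feasible separable `Y ≥ J`, where `J`
is the Choi matrix of `N`; their infimum is `Σ(N) = 2 ^ E_max(N)`. -/
def choiSepValues [DecidableEq κ] [Fintype β] (J : Matrix (κ × β) (κ × β) ℂ) : Set ℝ :=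
  {μ | ∃ Y, SeparableAcross (Equiv.refl (κ × β)) Y ∧ (Y - J).PosSemidef ∧
    (μ • (1 : Matrix κ κ ℂ) - ptrSnd Y).PosSemidef}

theorem sepValues_nonempty [Fintype ι] (e : ι ≃ α × β) {X : Matrix ι ι ℂ} (hX : X.IsHermitian) :
    (sepValues e X).Nonempty := by
  classical
  obtain ⟨c, hc, hcX⟩ := exists_posSemidef_smul_one_sub hX
  exact ⟨_, c • 1, .smul_one e hc, hcX, rfl⟩

theorem nonneg_of_mem_sepValues [Fintype ι] [Finite α] [Finite β] {e : ι ≃ α × β}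
    {X : Matrix ι ι ℂ} {t : ℝ} (ht : t ∈ sepValues e X) : 0 ≤ t := by
  obtain ⟨C, hC, -, rfl⟩ := ht
  exact (Complex.nonneg_iff.1 hC.posSemidef.trace_nonneg).1

theorem choiSepValues_nonempty [Finite κ] [DecidableEq κ] [Fintype β]
    {J : Matrix (κ × β) (κ × β) ℂ} (hJ : J.IsHermitian) : (choiSepValues J).Nonempty := by
  classical
  have := Fintype.ofFinite κ
  obtain ⟨c, hc, hcJ⟩ := exists_posSemidef_smul_one_sub hJ
  have hY : SeparableAcross (Equiv.refl (κ × β)) (c • (1 : Matrix (κ × β) (κ × β) ℂ)) :=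
    .smul_one _ hc
  obtain ⟨μ, -, hμ⟩ := exists_posSemidef_smul_one_sub (posSemidef_ptrSnd hY.posSemidef).isHermitian
  exact ⟨μ, c • 1, hY, hcJ, hμ⟩

theorem nonneg_of_mem_choiSepValues [Finite κ] [Nonempty κ] [DecidableEq κ] [Fintype β]
    {J : Matrix (κ × β) (κ × β) ℂ} {μ : ℝ} (hμ : μ ∈ choiSepValues J) : 0 ≤ μ := by
  obtain ⟨Y, hY, -, hYμ⟩ := hμ
  have hμ1 : (μ • (1 : Matrix κ κ ℂ)).PosSemidef := by
    simpa only [sub_add_cancel] using hYμ.add (posSemidef_ptrSnd hY.posSemidef)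
  simpa using hμ1.diag_nonneg (i := Classical.arbitrary κ)

theorem exists_mem_sepValues_choiApply_le [Fintype α] [Fintype κ] [DecidableEq κ] [Fintype β]
    [Fintype γ] {X : Matrix (α × κ × γ) (α × κ × γ) ℂ} {J : Matrix (κ × β) (κ × β) ℂ} {μ t : ℝ}
    (hX : X.PosSemidef) (hμ : μ ∈ choiSepValues J)
    (ht : t ∈ sepValues (Equiv.prodAssoc α κ γ).symm X) :
    ∃ s ∈ sepValues (Equiv.refl (α × β × γ)) (choiApply X J), s ≤ μ * t := by
  obtain ⟨Y, hY, hJY, hYμ⟩ := hμ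
  obtain ⟨C, hC, hXC, rfl⟩ := ht
  refine ⟨_, ⟨choiApply C Y, hC.choiApply hY,
    posSemidef_choiApply_sub_choiApply hX hXC hY.posSemidef hJY, rfl⟩, ?_⟩
  simpa using (Complex.le_def.1 (trace_choiApply_le hC.posSemidef hYμ)).1

end Values

theorem le_mul_sInf {S : Set ℝ} {w t : ℝ} (hS : S.Nonempty) (ht : 0 ≤ t)
    (h : ∀ s ∈ S, w ≤ t * s) : w ≤ t * sInf S := by
  rw [← smul_eq_mul, ← Real.sInf_smul_of_nonneg ht]
  exact le_csInf hS.smul_set (Set.forall_mem_image.2 h)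

theorem le_sInf_mul_sInf {S T : Set ℝ} {w : ℝ} (hS : S.Nonempty) (hT : T.Nonempty)
    (hS0 : ∀ s ∈ S, 0 ≤ s) (hT0 : ∀ t ∈ T, 0 ≤ t) (h : ∀ s ∈ S, ∀ t ∈ T, w ≤ s * t) :
    w ≤ sInf S * sInf T := by
  refine le_mul_sInf hT (Real.sInf_nonneg hS0) fun t ht => ?_
  rw [mul_comm]
  refine le_mul_sInf hS (hT0 t ht) fun s hs => ?_
  rw [mul_comm]
  exact h s hs t ht

theorem emax_sdp_value_inequality_general {α κ β γ : Type*} [Fintype α] [Fintype κ]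
    [DecidableEq κ] [Nonempty κ] [Fintype β] [Fintype γ]
    {X : Matrix (α × κ × γ) (α × κ × γ) ℂ} {J : Matrix (κ × β) (κ × β) ℂ}
    (hX : X.PosSemidef) (hJ : J.IsHermitian) :
    sInf (sepValues (Equiv.refl (α × β × γ)) (choiApply X J)) ≤
      sInf (choiSepValues J) * sInf (sepValues (Equiv.prodAssoc α κ γ).symm X) := by
  refine le_sInf_mul_sInf (choiSepValues_nonempty hJ) (sepValues_nonempty _ hX.isHermitian)
    (fun _ => nonneg_of_mem_choiSepValues) (fun _ => nonneg_of_mem_sepValues) fun μ hμ t ht => ?_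
  obtain ⟨s, hs, hle⟩ := exists_mem_sepValues_choiApply_le hX hμ ht
  exact (csInf_le ⟨0, fun _ => nonneg_of_mem_sepValues⟩ hs).trans hle

/-- `W_sep(A';BB')_ω ≤ Σ(N) ⬝ W_sep(A'A;B')_ρ`: the optimization-value form of
Proposition 3. -/
theorem emax_sdp_value_inequality
    {A' A B' B : Type*}
    [Fintype A'] [Fintype A] [Fintype B'] [Fintype B] [DecidableEq A]
    [Nonempty A'] [Nonempty A] [Nonempty B'] [Nonempty B]
    (ρ : Matrix (A' × A × B') (A' × A × B') ℂ) (J : Matrix (A × B) (A × B) ℂ)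
    (hρ : ρ.PosSemidef) (hJ : J.PosSemidef)
    (ω : Matrix (A' × B × B') (A' × B × B') ℂ)
    (hω : ∀ x y, ω x y = ∑ a : A, ∑ a2 : A,
      ρ (x.1, a, x.2.2) (y.1, a2, y.2.2) * J (a, x.2.1) (a2, y.2.1)) :
    sInf {t : ℝ | ∃ E : Matrix (A' × B × B') (A' × B × B') ℂ,
        (∃ (m : ℕ) (R : Fin m → Matrix A' A' ℂ)
            (W : Fin m → Matrix (B × B') (B × B') ℂ),
          (∀ i, (R i).PosSemidef) ∧ (∀ i, (W i).PosSemidef) ∧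
          ∀ x y : A' × B × B', E x y = ∑ i, R i x.1 y.1 * W i x.2 y.2) ∧
        (E - ω).PosSemidef ∧ t = (E.trace).re}
      ≤ (sInf {μ : ℝ | ∃ Y : Matrix (A × B) (A × B) ℂ, InSepCone Y ∧
            (Y - J).PosSemidef ∧
            (μ • (1 : Matrix A A ℂ) - ptrSnd Y).PosSemidef})
        * sInf {t : ℝ | ∃ C : Matrix (A' × A × B') (A' × A × B') ℂ,
            (∃ (n : ℕ) (P : Fin n → Matrix (A' × A) (A' × A) ℂ)
                (Q : Fin n → Matrix B' B' ℂ),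
              (∀ i, (P i).PosSemidef) ∧ (∀ i, (Q i).PosSemidef) ∧
              ∀ x y : A' × A × B',
                C x y = ∑ i, P i (x.1, x.2.1) (y.1, y.2.1) * Q i x.2.2 y.2.2) ∧
            (C - ρ).PosSemidef ∧ t = (C.trace).re} := by
  obtain rfl : ω = choiApply ρ J := Matrix.ext hω
  exact emax_sdp_value_inequality_general hρ hJ.isHermitian
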